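/- Let p ≥ 3 be a prime and 3 ≤ k ≤ p. There exists a resolved partial linear space with pk points and p parallel classes, whose points form a half-set of Z_{p(2k+1)} \ ⟨2k+1⟩, each parallel class is a partition of the point set into p blocks of size k each summing to zero in Z_{p(2k+1)}, every two points lie in at most one common block, and each block admits an ordering whose partial sums are pairwise distinct in Z_{p(2k+1)}. -/

import Mathlib

/-!
Lift along the extension `0 → ZMod n → ZMod (n(2k+1)) → ZMod (2k+1) → 0`. In the quotient, label
the vertices of a `k`-cycle by integers so that the differences `e₀, …, e_{k-1}` along its edges
have absolute values `1, …, k` up to sign modulo `2k+1`. These differences form a half-set of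
`ZMod (2k+1) \ {0}`, they sum to zero, and their partial sums are the vertex labels up to a
translation, hence distinct. The points are therefore the elements `e_j + (2k+1)y` with
`y : ZMod n`, and any block meeting each coset `e_j + ⟨2k+1⟩` exactly once is simple.

Choose weights `r_j` and abscissas `t_j` with `∑ r_j = ∑ r_j t_j = 0`. The block of the line
`(a, b)` consists of the points with `y_j = r_j (a t_j + b)`; the two relations make its sum vanish.
The lines of slope `a` form one parallel class: they partition the points because each `r_j` is a
unit, and two distinct points lie on at most one line because each `t_i - t_j` with `i ≠ j` is a
unit.
-/

namespace HeffterSpace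

section GracefulCycle

/-- A graceful or nearly graceful labelling of the `k`-cycle with vertices `0, …, k - 1`, extended
by `gracefulVertex k k = gracefulVertex k 0`. The labels zigzag `0, k, 1, k - 1, …`, with one high
label skipped to free the length of the closing edge. Vertex `0` is moved to `-1` when `k(k+1)/2`
is odd: the edge lengths of a closed cycle have even sum, so they cannot be `1, …, k` in that
case. -/
def gracefulVertex (k j : ℕ) : ℤ :=
  if j = 0 ∨ j = k then -((k + 1) / 2 % 2)
  else if j % 2 = 0 then j / 2
  else if j / 2 < (k + 1) / 4 then k - j / 2
  else k - j / 2 - 1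

/-- The increment of `gracefulVertex` along the edge from vertex `j` to vertex `j + 1`. -/
def gracefulEdge (k j : ℕ) : ℤ := gracefulVertex k (j + 1) - gracefulVertex k j

/-- The length of edge `j` of the labelled cycle. For `j < k` these are the numbers `1, …, k`,
with `k` replaced by `k + 1`, which is `-k` modulo `2k + 1`, when `k(k+1)/2` is odd. -/
def gracefulLength (k j : ℕ) : ℤ :=
  if j = 0 then k + (k + 1) / 2 % 2
  else if j = k - 1 then k - 2 * ((k + 1) / 4)
  else if j < 2 * ((k + 1) / 4) then k - j
  else k - j - 1

variable {k : ℕ}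

lemma abs_gracefulEdge (hk : 3 ≤ k) {j : ℕ} (hj : j < k) :
    |gracefulEdge k j| = gracefulLength k j := by
  unfold gracefulEdge gracefulVertex gracefulLength
  rcases Nat.mod_two_eq_zero_or_one j with h | h <;> grind

lemma gracefulLength_pos {j : ℕ} (hj : j < k) : 0 < gracefulLength k j := by
  unfold gracefulLength; grind

lemma gracefulLength_le {j : ℕ} : gracefulLength k j ≤ k + 1 := by
  unfold gracefulLength; grind

lemma gracefulLength_add_le (hk : 3 ≤ k) {i j : ℕ} (hij : i ≠ j) :
    gracefulLength k i + gracefulLength k j ≤ 2 * k := by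
  unfold gracefulLength; grind

lemma gracefulLength_injOn : Set.InjOn (gracefulLength k) (Set.Iio k) := by
  unfold gracefulLength Set.InjOn; grind

lemma intCast_add_ne_zero {m : ℕ} {a b : ℤ} (hne : |a| ≠ |b|) (hlt : |a| + |b| < m) :
    (a + b : ZMod m) ≠ 0 := by
  rw [← Int.cast_add, Ne, ZMod.intCast_zmod_eq_zero_iff_dvd]
  intro hdvd
  have hsum : a + b = 0 := Int.eq_zero_of_abs_lt_dvd hdvd ((abs_add_le a b).trans_lt hlt)
  exact hne (by rw [eq_neg_of_add_eq_zero_left hsum, abs_neg])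

lemma gracefulEdge_injective (hk : 3 ≤ k) :
    Function.Injective fun j : Fin k => (gracefulEdge k j : ZMod (2 * k + 1)) := by
  intro i j hij
  by_contra hne
  have hne' : (i : ℕ) ≠ j := Fin.val_ne_of_ne hne
  refine intCast_add_ne_zero (m := 2 * k + 1) (a := gracefulEdge k i) (b := -gracefulEdge k j)
    ?_ ?_ (by simpa [← sub_eq_add_neg, sub_eq_zero] using hij)
  all_goals rw [abs_neg, abs_gracefulEdge hk i.2, abs_gracefulEdge hk j.2]
  · exact gracefulLength_injOn.ne i.2 j.2 hne'
  · push_cast; linarith [gracefulLength_add_le hk hne']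

lemma gracefulEdge_add_ne_zero (hk : 3 ≤ k) (i j : Fin k) :
    (gracefulEdge k i + gracefulEdge k j : ZMod (2 * k + 1)) ≠ 0 := by
  obtain rfl | hne := eq_or_ne i j
  · rw [← two_mul, ← Int.cast_ofNat, ← Int.cast_mul, Ne, ZMod.intCast_zmod_eq_zero_iff_dvd]
    intro hdvd
    have hcoprime : IsCoprime ((2 * k + 1 : ℕ) : ℤ) 2 := ⟨1, -k, by push_cast; ring⟩
    have hzero : gracefulEdge k i = 0 := by
      refine Int.eq_zero_of_abs_lt_dvd (hcoprime.dvd_of_dvd_mul_left hdvd) ?_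
      rw [abs_gracefulEdge hk i.2]
      have := gracefulLength_le (k := k) (j := i)
      push_cast; omega
    have := gracefulLength_pos i.2
    rw [← abs_gracefulEdge hk i.2, hzero, abs_zero] at this
    exact this.false
  · have hne' : (i : ℕ) ≠ j := Fin.val_ne_of_ne hne
    apply intCast_add_ne_zero <;> rw [abs_gracefulEdge hk i.2, abs_gracefulEdge hk j.2]
    · exact gracefulLength_injOn.ne i.2 j.2 hne'
    · push_cast; linarith [gracefulLength_add_le hk hne']

lemma range_union_neg_eq_compl_zero {ι Q : Type*} [Fintype ι] [AddGroup Q] [Fintype Q]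
    {c : ι → Q} (hc : Function.Injective c) (hadd : ∀ i j, c i + c j ≠ 0)
    (hcard : Fintype.card Q = 2 * Fintype.card ι + 1) :
    Set.range c ∪ -Set.range c = {0}ᶜ := by
  have hdisj : Disjoint (Set.range c) (-Set.range c) := by
    rw [Set.disjoint_left]
    rintro _ ⟨i, rfl⟩ ⟨j, hj⟩
    exact hadd i j (by rw [hj, add_neg_cancel])
  have hsub : Set.range c ∪ -Set.range c ⊆ {0}ᶜ := by
    rintro z hz rfl
    obtain ⟨i, hi⟩ : (0 : Q) ∈ Set.range c := by simpa using hz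
    exact hadd i i (by rw [hi, add_zero])
  refine Set.eq_of_subset_of_ncard_le hsub ?_
  rw [Set.ncard_union_eq hdisj, ← Set.image_neg_eq_neg,
    Set.ncard_image_of_injective _ neg_injective, Set.ncard_range_of_injective hc,
    Set.ncard_compl, Set.ncard_singleton, Nat.card_eq_fintype_card, Nat.card_eq_fintype_card]
  omega

lemma range_gracefulEdge_union_neg (hk : 3 ≤ k) :
    (Set.range fun j : Fin k => (gracefulEdge k j : ZMod (2 * k + 1))) ∪
      -Set.range (fun j : Fin k => (gracefulEdge k j : ZMod (2 * k + 1))) = {0}ᶜ :=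
  range_union_neg_eq_compl_zero (gracefulEdge_injective hk) (gracefulEdge_add_ne_zero hk)
    (by simp [ZMod.card])

lemma sum_gracefulEdge (k : ℕ) : ∑ j : Fin k, gracefulEdge k j = 0 := by
  rw [Fin.sum_univ_eq_sum_range (gracefulEdge k)]
  simp only [gracefulEdge, Finset.sum_range_sub]
  simp [gracefulVertex]

lemma sum_Iic_gracefulEdge (i : Fin k) :
    ∑ j ∈ Finset.Iic i, gracefulEdge k j = gracefulVertex k (i + 1) - gracefulVertex k 0 :=
  Fin.sum_Iic_sub i fun j => gracefulVertex k j

lemma gracefulVertex_mem_Icc {j : ℕ} (hj : j ≤ k) : gracefulVertex k j ∈ Set.Icc (-1 : ℤ) k := by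
  unfold gracefulVertex; grind

lemma gracefulVertex_injOn : Set.InjOn (gracefulVertex k) (Set.Icc 1 k) := by
  unfold gracefulVertex Set.InjOn; grind

lemma injective_sum_Iic_gracefulEdge (k : ℕ) :
    Function.Injective fun i : Fin k =>
      ∑ j ∈ Finset.Iic i, (gracefulEdge k j : ZMod (2 * k + 1)) := by
  intro i j hij
  simp only [← Int.cast_sum, sum_Iic_gracefulEdge, Int.cast_sub, sub_left_inj] at hij
  rw [← sub_eq_zero, ← Int.cast_sub, ZMod.intCast_zmod_eq_zero_iff_dvd] at hij
  have hi := gracefulVertex_mem_Icc i.2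
  have hj := gracefulVertex_mem_Icc j.2
  have hvertex : gracefulVertex k (i + 1) = gracefulVertex k (j + 1) :=
    sub_eq_zero.1 <| Int.eq_zero_of_abs_lt_dvd hij <| by grind
  have := gracefulVertex_injOn ⟨by omega, i.2⟩ ⟨by omega, j.2⟩ hvertex
  exact Fin.ext (by omega)

end GracefulCycle

section Weights

variable {k : ℕ}

/-- Unit masses at `0, …, k - 1` minus a mass `k` shared by the one or two middle positions, so
that both the total mass and the first moment vanish. If `k` is odd, the two positions coincide. -/
def centralWeight (k j : ℕ) : ℤ :=
  1 - (if j = k / 2 then ((k + 1) / 2 : ℤ) else 0) -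
    (if j = (k - 1) / 2 then (k / 2 : ℤ) else 0)

lemma sum_centralWeight (k : ℕ) : ∑ j : Fin k, centralWeight k j = 0 := by
  rw [Fin.sum_univ_eq_sum_range (centralWeight k)]
  simp only [centralWeight, Finset.sum_sub_distrib, Finset.sum_ite_eq', Finset.mem_range,
    Finset.sum_const, Finset.card_range, nsmul_one]
  grind

lemma sum_mul_val_eq_zero_of_rev {R : Type*} [CommRing R] [NoZeroDivisors R] [CharZero R]
    {w : Fin k → R} (hrev : ∀ j, w j.rev = w j) (hsum : ∑ j, w j = 0) : ∑ j, w j * (j : ℕ) = 0 := by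
  have hreflect : ∑ j, w j * (j.rev : ℕ) = ∑ j, w j * (j : ℕ) := by
    rw [← Equiv.sum_comp Fin.revPerm]
    simp only [Fin.revPerm_apply, hrev, Fin.rev_rev]
  have hadd : ∑ j, w j * (j : ℕ) + ∑ j, w j * (j.rev : ℕ) = (k - 1) * ∑ j, w j := by
    rw [← Finset.sum_add_distrib, Finset.mul_sum]
    refine Finset.sum_congr rfl fun j _ => ?_
    rw [Fin.val_rev, Nat.cast_sub j.2]; push_cast; ring
  rwa [hreflect, hsum, mul_zero, add_self_eq_zero] at hadd

lemma centralWeight_rev (j : Fin k) : centralWeight k j.rev = centralWeight k j := by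
  have := j.rev.2
  unfold centralWeight
  grind

lemma centralWeight_ne_zero (hk : 3 ≤ k) (j : ℕ) : centralWeight k j ≠ 0 := by
  unfold centralWeight; grind

lemma abs_centralWeight_lt (hk : 1 < k) (j : ℕ) : |centralWeight k j| < k := by
  unfold centralWeight; grind

lemma sum_centralWeight_mul_val (k : ℕ) : ∑ j : Fin k, centralWeight k j * (j : ℕ) = 0 :=
  sum_mul_val_eq_zero_of_rev centralWeight_rev (sum_centralWeight k)

lemma isUnit_intCast_of_abs_lt {n : ℕ} (hn : ∀ q, q.Prime → q ∣ n → k ≤ q) {a : ℤ} (ha : a ≠ 0)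
    (hak : |a| < k) : IsUnit (a : ZMod n) := by
  rw [ZMod.coe_int_isUnit_iff_isCoprime, Int.isCoprime_iff_nat_coprime, Int.natAbs_natCast]
  refine Nat.coprime_of_dvd fun q hq hqn hqa => ?_
  have hqle : q ≤ a.natAbs := Nat.le_of_dvd (Int.natAbs_pos.2 ha) hqa
  have hlt : (q : ℤ) < k := by grind
  have := hn q hq hqn
  omega

end Weights

section Lines

variable {ι R G : Type*} [CommRing R] {φ : ι × R ↪ G} {r t : ι → R} {a a' b b' : R}

/-- The graph of the line `y = a t + b`, sampled at the abscissas `t j` and scaled by the weights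
`r j`. -/
def linePoint (r t : ι → R) (a b : R) : ι ↪ ι × R where
  toFun j := (j, r j * (a * t j + b))
  inj' _ _ h := congrArg Prod.fst h

@[simp]
lemma linePoint_apply (j : ι) : linePoint r t a b j = (j, r j * (a * t j + b)) := rfl

variable [Fintype ι]

/-- The block of the line `y = a t + b` in a point set parametrized by `φ`. -/
def lineBlock (φ : ι × R ↪ G) (r t : ι → R) (a b : R) : Finset G :=
  Finset.univ.map ((linePoint r t a b).trans φ)

lemma apply_mem_lineBlock_iff {x : ι × R} :
    φ x ∈ lineBlock φ r t a b ↔ r x.1 * (a * t x.1 + b) = x.2 := by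
  simp [lineBlock, Prod.ext_iff]

lemma image_linePoint [DecidableEq G] :
    Finset.univ.image (fun j => φ (linePoint r t a b j)) = lineBlock φ r t a b := by
  rw [lineBlock, Finset.map_eq_image]; rfl

lemma lineBlock_subset [Fintype R] : lineBlock φ r t a b ⊆ Finset.univ.map φ := by
  rw [lineBlock, ← Finset.map_map]
  exact Finset.map_subset_map.2 (Finset.subset_univ _)

lemma card_lineBlock : (lineBlock φ r t a b).card = Fintype.card ι := by
  rw [lineBlock, Finset.card_map, Finset.card_univ]

lemma existsUnique_apply_mem_lineBlock (hr : ∀ j, IsUnit (r j)) (a : R) (x : ι × R) :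
    ∃! b, φ x ∈ lineBlock φ r t a b := by
  obtain ⟨c, hc⟩ := (hr x.1).dvd (a := x.2)
  simp only [apply_mem_lineBlock_iff, hc]
  exact ⟨c - a * t x.1, by simp only [add_sub_cancel],
    fun b hb => eq_sub_of_add_eq' ((hr x.1).mul_left_cancel hb)⟩

lemma lineBlock_injective [Nonempty ι] (hr : ∀ j, IsUnit (r j)) (a : R) :
    Function.Injective (lineBlock φ r t a) := by
  intro b b' h
  obtain ⟨j⟩ := ‹Nonempty ι›
  have hmem : φ (linePoint r t a b j) ∈ lineBlock φ r t a b := apply_mem_lineBlock_iff.2 rfl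
  exact (existsUnique_apply_mem_lineBlock hr a _).unique hmem (h ▸ hmem)

lemma eq_and_eq_of_apply_mem_lineBlock (hr : ∀ j, IsUnit (r j))
    (ht : Pairwise fun i j => IsUnit (t i - t j)) {x y : ι × R} (hxy : x ≠ y)
    (hx : φ x ∈ lineBlock φ r t a b) (hy : φ y ∈ lineBlock φ r t a b)
    (hx' : φ x ∈ lineBlock φ r t a' b') (hy' : φ y ∈ lineBlock φ r t a' b') :
    a = a' ∧ b = b' := by
  rw [apply_mem_lineBlock_iff] at hx hy hx' hy'
  have hfst : x.1 ≠ y.1 := fun h => hxy (Prod.ext h (by rw [← hx, ← hy, h]))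
  have hlx := (hr x.1).mul_left_cancel (hx.trans hx'.symm)
  have hly := (hr y.1).mul_left_cancel (hy.trans hy'.symm)
  have ha : a = a' := (ht hfst).mul_left_cancel (by linear_combination hlx - hly)
  exact ⟨ha, by linear_combination hlx - t x.1 * ha⟩

variable [Fintype R] [DecidableEq G]

/-- The blocks of all lines of slope `a`. -/
def parallelClass (φ : ι × R ↪ G) (r t : ι → R) (a : R) : Finset (Finset G) :=
  Finset.univ.image (lineBlock φ r t a)

lemma mem_parallelClass {B : Finset G} :
    B ∈ parallelClass φ r t a ↔ ∃ b, lineBlock φ r t a b = B := by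
  simp [parallelClass]

lemma card_parallelClass [Nonempty ι] (hr : ∀ j, IsUnit (r j)) :
    (parallelClass φ r t a).card = Fintype.card R := by
  rw [parallelClass, Finset.card_image_of_injective _ (lineBlock_injective hr a), Finset.card_univ]

lemma existsUnique_mem_parallelClass (hr : ∀ j, IsUnit (r j)) (a : R) (x : ι × R) :
    ∃! B, B ∈ parallelClass φ r t a ∧ φ x ∈ B := by
  obtain ⟨b, hb, hunique⟩ := existsUnique_apply_mem_lineBlock (φ := φ) (t := t) hr a x
  refine ⟨lineBlock φ r t a b, ⟨mem_parallelClass.2 ⟨b, rfl⟩, hb⟩, ?_⟩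
  rintro _ ⟨hB, hx⟩
  obtain ⟨b', rfl⟩ := mem_parallelClass.1 hB
  rw [hunique b' hx]

lemma eq_and_eq_of_mem_parallelClass (hr : ∀ j, IsUnit (r j))
    (ht : Pairwise fun i j => IsUnit (t i - t j)) {B B' : Finset G}
    (hB : B ∈ parallelClass φ r t a) (hB' : B' ∈ parallelClass φ r t a') {x y : G} (hxy : x ≠ y)
    (hx : x ∈ B) (hy : y ∈ B) (hx' : x ∈ B') (hy' : y ∈ B') : a = a' ∧ B = B' := by
  obtain ⟨b, rfl⟩ := mem_parallelClass.1 hB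
  obtain ⟨b', rfl⟩ := mem_parallelClass.1 hB'
  obtain ⟨x, -, rfl⟩ := Finset.mem_map.1 (lineBlock_subset hx)
  obtain ⟨y, -, rfl⟩ := Finset.mem_map.1 (lineBlock_subset hy)
  obtain ⟨rfl, rfl⟩ := eq_and_eq_of_apply_mem_lineBlock hr ht (ne_of_apply_ne φ hxy) hx hy hx' hy'
  exact ⟨rfl, rfl⟩

end Lines

section Extension

variable {ι R G Q : Type*} [AddCommGroup G] [AddCommGroup Q] {π : G →+ Q} {e : ι → G}

/-- The element of the coset of `g.range` through `e x.1` that lies at position `x.2`; as `x`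
varies, these fill the chosen cosets. -/
def cosetPoint [AddGroup R] (e : ι → G) (g : R →+ G) (x : ι × R) : G := e x.1 + g x.2

section AddGroup

variable [AddGroup R] {g : R →+ G}

lemma map_cosetPoint (hπ : Function.Exact g π) (x : ι × R) : π (cosetPoint e g x) = π (e x.1) := by
  rw [cosetPoint, map_add, hπ.apply_apply_eq_zero, add_zero]

lemma cosetPoint_injective (hg : Function.Injective g) (hπ : Function.Exact g π)
    (he : Function.Injective fun j => π (e j)) : Function.Injective (cosetPoint e g) := by
  rintro ⟨i, y⟩ ⟨j, z⟩ h
  obtain rfl : i = j := he (by simpa only [map_cosetPoint hπ] using congrArg π h)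
  obtain rfl : y = z := hg (add_left_cancel h)
  rfl

lemma range_cosetPoint (hπ : Function.Exact g π) :
    Set.range (cosetPoint e g) = π ⁻¹' Set.range fun j => π (e j) := by
  ext z
  constructor
  · rintro ⟨x, rfl⟩
    exact ⟨x.1, (map_cosetPoint hπ x).symm⟩
  · rintro ⟨j, hj⟩
    obtain ⟨y, hy⟩ := (hπ (z - e j)).1 (by rw [map_sub, ← hj, sub_self])
    exact ⟨(j, y), by rw [cosetPoint, hy, add_sub_cancel]⟩

lemma range_cosetPoint_union_neg (hπ : Function.Exact g π)
    (he : (Set.range fun j => π (e j)) ∪ -Set.range (fun j => π (e j)) = {0}ᶜ) :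
    Set.range (cosetPoint e g) ∪ -Set.range (cosetPoint e g) = (g.range : Set G)ᶜ := by
  have hneg (S : Set Q) : -(π ⁻¹' S) = π ⁻¹' (-S) := by ext; simp
  rw [range_cosetPoint hπ, hneg, ← Set.preimage_union, he, Set.preimage_compl]
  congr 1
  exact Set.ext hπ

end AddGroup

lemma sum_cosetPoint_linePoint [Fintype ι] [CommRing R] {g : R →+ G} {r t : ι → R}
    (he : ∑ j, e j = 0) (hr : ∑ j, r j = 0) (hrt : ∑ j, r j * t j = 0) (a b : R) :
    ∑ j, cosetPoint e g (linePoint r t a b j) = 0 := by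
  have hline : ∑ j, r j * (a * t j + b) = a * ∑ j, r j * t j + b * ∑ j, r j := by
    simp only [Finset.mul_sum, ← Finset.sum_add_distrib]
    exact Finset.sum_congr rfl fun j _ => by ring
  simp only [cosetPoint, linePoint_apply, Finset.sum_add_distrib,
    ← map_sum, he, hline, hr, hrt, mul_zero, add_zero, map_zero]

lemma injective_sum_Iic_of_map [Preorder ι] [LocallyFiniteOrderBot ι]
    (he : Function.Injective fun i => ∑ j ∈ Finset.Iic i, π (e j)) :
    Function.Injective fun i => ∑ j ∈ Finset.Iic i, e j :=
  fun i j h => he <| by simpa only [map_sum] using congrArg π h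

end Extension

section CyclicExtension

/-- The homomorphism `a ↦ a * m` onto the subgroup `⟨m⟩`, an embedding when `m ≠ 0`. -/
def scaleHom (n m : ℕ) : ZMod n →+ ZMod (n * m) :=
  ZMod.lift n ⟨zmultiplesHom _ (m : ZMod (n * m)), by simp [← Nat.cast_mul]⟩

lemma scaleHom_intCast (n m : ℕ) (a : ℤ) : scaleHom n m a = ((a * m : ℤ) : ZMod (n * m)) := by
  simp [scaleHom]

lemma scaleHom_injective {n m : ℕ} (hm : m ≠ 0) : Function.Injective (scaleHom n m) := by
  refine (ZMod.lift_injective n).2 fun a ha => ?_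
  have hdvd : ((n * m : ℕ) : ℤ) ∣ a * m := by
    rw [← ZMod.intCast_zmod_eq_zero_iff_dvd]; simpa using ha
  rw [ZMod.intCast_zmod_eq_zero_iff_dvd]
  push_cast at hdvd
  exact Int.dvd_of_mul_dvd_mul_right (by exact_mod_cast hm) hdvd

lemma range_scaleHom (n m : ℕ) :
    (scaleHom n m).range = AddSubgroup.zmultiples (m : ZMod (n * m)) := by
  ext z
  simp [AddSubgroup.mem_zmultiples_iff, ZMod.intCast_surjective.exists, scaleHom_intCast]

/-- The quotient map of `ZMod (n * m)` by its subgroup `⟨m⟩`. -/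
def reduction (n m : ℕ) : ZMod (n * m) →+ ZMod m :=
  (ZMod.castHom (Nat.dvd_mul_left m n) (ZMod m)).toAddMonoidHom

lemma reduction_intCast (n m : ℕ) (a : ℤ) : reduction n m a = a :=
  map_intCast (ZMod.castHom (Nat.dvd_mul_left m n) (ZMod m)) a

lemma exact_scaleHom_reduction (n m : ℕ) : Function.Exact (scaleHom n m) (reduction n m) := by
  intro z
  constructor
  · obtain ⟨a, rfl⟩ := ZMod.intCast_surjective z
    rw [reduction_intCast, ZMod.intCast_zmod_eq_zero_iff_dvd]
    rintro ⟨b, rfl⟩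
    exact ⟨b, by rw [scaleHom_intCast, mul_comm b]⟩
  · rintro ⟨y, rfl⟩
    obtain ⟨b, rfl⟩ := ZMod.intCast_surjective y
    rw [scaleHom_intCast, reduction_intCast]
    simp

end CyclicExtension

section HeffterPoint

variable {n k : ℕ}

/-- The points of the Heffter space: all lifts to `ZMod (n * (2 * k + 1))` of the edge increments
of the labelled `k`-cycle, indexed by an edge and a position in its coset. -/
def heffterPoint (n : ℕ) (hk : 3 ≤ k) : Fin k × ZMod n ↪ ZMod (n * (2 * k + 1)) where
  toFun := cosetPoint (fun j : Fin k => (gracefulEdge k j : ZMod (n * (2 * k + 1))))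
    (scaleHom n (2 * k + 1))
  inj' := cosetPoint_injective (scaleHom_injective (by omega)) (exact_scaleHom_reduction _ _)
    (by simpa only [reduction_intCast] using gracefulEdge_injective hk)

lemma coe_heffterPoint (hk : 3 ≤ k) : ⇑(heffterPoint n hk) = cosetPoint
    (fun j : Fin k => (gracefulEdge k j : ZMod (n * (2 * k + 1)))) (scaleHom n (2 * k + 1)) :=
  rfl

lemma range_heffterPoint_union_neg (hk : 3 ≤ k) :
    Set.range (heffterPoint n hk) ∪ -Set.range (heffterPoint n hk) =
      (AddSubgroup.zmultiples ((2 * k + 1 : ℕ) : ZMod (n * (2 * k + 1))) :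
        Set (ZMod (n * (2 * k + 1))))ᶜ := by
  rw [coe_heffterPoint, ← range_scaleHom]
  refine range_cosetPoint_union_neg (exact_scaleHom_reduction _ _) ?_
  simpa only [reduction_intCast] using range_gracefulEdge_union_neg hk

lemma injective_sum_Iic_heffterPoint (hk : 3 ≤ k) (y : Fin k → ZMod n) :
    Function.Injective fun i => ∑ j ∈ Finset.Iic i, heffterPoint n hk (j, y j) := by
  refine injective_sum_Iic_of_map (π := reduction n (2 * k + 1)) ?_
  simpa only [coe_heffterPoint, map_cosetPoint (exact_scaleHom_reduction n (2 * k + 1)),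
    reduction_intCast] using injective_sum_Iic_gracefulEdge k

/-- The factor `r j` that scales the `j`-th ordinate of each line. -/
def weight (n k : ℕ) (j : Fin k) : ZMod n := centralWeight k j

/-- The abscissa `t j` at which each line is sampled for its `j`-th point. -/
def abscissa (n k : ℕ) (j : Fin k) : ZMod n := (j : ℕ)

lemma sum_weight (n k : ℕ) : ∑ j, weight n k j = 0 := by
  simp only [weight, ← Int.cast_sum, sum_centralWeight, Int.cast_zero]

lemma sum_weight_mul_abscissa (n k : ℕ) : ∑ j, weight n k j * abscissa n k j = 0 := by
  simpa [weight, abscissa] using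
    congrArg (Int.cast (R := ZMod n)) (sum_centralWeight_mul_val k)

lemma isUnit_weight (hk : 3 ≤ k) (hn : ∀ q, q.Prime → q ∣ n → k ≤ q) (j : Fin k) :
    IsUnit (weight n k j) :=
  isUnit_intCast_of_abs_lt hn (centralWeight_ne_zero hk j) (abs_centralWeight_lt (by omega) j)

lemma pairwise_isUnit_abscissa_sub (hn : ∀ q, q.Prime → q ∣ n → k ≤ q) :
    Pairwise fun i j => IsUnit (abscissa n k i - abscissa n k j) := fun i j hij => by
  simpa [abscissa] using
    isUnit_intCast_of_abs_lt hn (a := (i : ℕ) - (j : ℕ)) (by omega) (by grind)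

lemma sum_lineBlock_heffterPoint (hk : 3 ≤ k) (a b : ZMod n) :
    ∑ x ∈ lineBlock (heffterPoint n hk) (weight n k) (abscissa n k) a b, x = 0 := by
  simp only [lineBlock, Finset.sum_map, Function.Embedding.trans_apply, coe_heffterPoint]
  refine sum_cosetPoint_linePoint ?_ (sum_weight n k) (sum_weight_mul_abscissa n k) a b
  rw [← Int.cast_sum, sum_gracefulEdge, Int.cast_zero]

end HeffterPoint

end HeffterSpace

open HeffterSpace

theorem stmt_11_general (n k : ℕ) (hk : 3 ≤ k) (hn : ∀ q, q.Prime → q ∣ n → k ≤ q) :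
    ∃ (V : Finset (ZMod (n * (2 * k + 1))))
      (P : Fin n → Finset (Finset (ZMod (n * (2 * k + 1))))),
      V.card = n * k ∧
      ((V : Set (ZMod (n * (2 * k + 1)))) ∪ (fun x => -x) '' (V : Set (ZMod (n * (2 * k + 1))))
        = (AddSubgroup.zmultiples ((2 * k + 1 : ℕ) : ZMod (n * (2 * k + 1))) :
          Set (ZMod (n * (2 * k + 1))))ᶜ) ∧
      (∀ c, (P c).card = n) ∧
      (∀ c, ∀ B ∈ P c, B.card = k ∧ B ⊆ V ∧ (∑ x ∈ B, x) = 0) ∧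
      (∀ c, ∀ x ∈ V, ∃! B, B ∈ P c ∧ x ∈ B) ∧
      (∀ c₁ c₂, ∀ B₁ ∈ P c₁, ∀ B₂ ∈ P c₂, ∀ x y : ZMod (n * (2 * k + 1)), x ≠ y →
        x ∈ B₁ → y ∈ B₁ → x ∈ B₂ → y ∈ B₂ → c₁ = c₂ ∧ B₁ = B₂) ∧
      (∀ c, ∀ B ∈ P c, ∃ f : Fin k → ZMod (n * (2 * k + 1)),
        Finset.image f Finset.univ = B ∧
        Function.Injective (fun i : Fin k => ∑ j ∈ Finset.Iic i, f j)) := by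
  have : NeZero n := ⟨by rintro rfl; linarith [hn 2 Nat.prime_two (dvd_zero 2)]⟩
  have : NeZero k := ⟨by omega⟩
  have hr := isUnit_weight hk hn
  refine ⟨Finset.univ.map (heffterPoint n hk), fun c => parallelClass (heffterPoint n hk)
    (weight n k) (abscissa n k) (ZMod.finEquiv n c), ?card_points, ?half_set, ?card_class, ?block,
    ?partition, ?linear, ?simple⟩
  case card_points => simp [ZMod.card, mul_comm]
  case half_set => simpa using range_heffterPoint_union_neg hk
  case card_class => exact fun c => (card_parallelClass hr).trans (ZMod.card n)
  case block =>
    intro c B hB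
    obtain ⟨b, rfl⟩ := mem_parallelClass.1 hB
    exact ⟨card_lineBlock.trans (Fintype.card_fin k), lineBlock_subset,
      sum_lineBlock_heffterPoint hk _ b⟩
  case partition =>
    intro c z hz
    obtain ⟨x, -, rfl⟩ := Finset.mem_map.1 hz
    exact existsUnique_mem_parallelClass hr _ x
  case linear =>
    intro c₁ c₂ B₁ h₁ B₂ h₂ x y hxy hx₁ hy₁ hx₂ hy₂
    simpa using eq_and_eq_of_mem_parallelClass hr (pairwise_isUnit_abscissa_sub hn)
      h₁ h₂ hxy hx₁ hy₁ hx₂ hy₂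
  case simple =>
    intro c B hB
    obtain ⟨b, rfl⟩ := mem_parallelClass.1 hB
    exact ⟨_, image_linePoint, injective_sum_Iic_heffterPoint hk _⟩

/-- Existence of a simple cyclic `(pk, k; p)_p` relative Heffter space: a resolved
partial linear space with `pk` points forming a half-set of
`ZMod (p(2k+1)) \ ⟨2k+1⟩`, with `p` parallel classes each partitioning the points
into `p` zero-sum blocks of size `k`, any two points on at most one common block,
and every block admitting a simple ordering. -/
theorem stmt_11 (p k : ℕ) (hp : p.Prime) (hp3 : 3 ≤ p) (hk3 : 3 ≤ k) (hkp : k ≤ p) :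
    ∃ (V : Finset (ZMod (p * (2 * k + 1))))
      (P : Fin p → Finset (Finset (ZMod (p * (2 * k + 1))))),
      V.card = p * k ∧
      ((V : Set (ZMod (p * (2 * k + 1)))) ∪ (fun x => -x) '' (V : Set (ZMod (p * (2 * k + 1))))
        = (AddSubgroup.zmultiples ((2 * k + 1 : ℕ) : ZMod (p * (2 * k + 1))) : Set (ZMod (p * (2 * k + 1))))ᶜ) ∧
      (∀ c, (P c).card = p) ∧
      (∀ c, ∀ B ∈ P c, B.card = k ∧ B ⊆ V ∧ (∑ x ∈ B, x) = 0) ∧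
      (∀ c, ∀ x ∈ V, ∃! B, B ∈ P c ∧ x ∈ B) ∧
      (∀ c₁ c₂, ∀ B₁ ∈ P c₁, ∀ B₂ ∈ P c₂, ∀ x y : ZMod (p * (2 * k + 1)), x ≠ y →
        x ∈ B₁ → y ∈ B₁ → x ∈ B₂ → y ∈ B₂ → c₁ = c₂ ∧ B₁ = B₂) ∧
      (∀ c, ∀ B ∈ P c, ∃ f : Fin k → ZMod (p * (2 * k + 1)),
        Finset.image f Finset.univ = B ∧
        Function.Injective (fun i : Fin k => ∑ j ∈ Finset.Iic i, f j)) :=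
  stmt_11_general p k hk3 fun _ hq hqp =>
    ((Nat.prime_dvd_prime_iff_eq hq hp).1 hqp).symm ▸ hkp
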